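/- For every prime p > 3, the sum Σ_{n=1}^{⌊p/3⌋} (n/p) is nonnegative. -/

import Mathlib

/-!
For `0 < x < 1` the Fourier series `∑ sin (2πnx) / n` has sum `π (1/2 - x)`. Comparing it at
`x = a/p` and at `x = a/p - 1/3`, weighting by `(a/p)` and summing over `a` gives
`π ∑_{a < p/3} (a/p) = ∑_n c_n / n`, where
`c_n = ∑_a (a/p) (sin (2πna/p) - sin (2πn(a/p - 1/3)))`.
The value of the quadratic Gauss sum shows `c_n = c ψ(n)` with `c > 0`, where `ψ` is `(n/p)(n/3)`
for `p ≡ 1 (mod 4)` and `(n/p)(n/3)²` for `p ≡ 3 (mod 4)`. So the sum is a positive multiple of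
`L(1, ψ)`, which is nonnegative as the limit, for `s → 1⁺`, of Euler products with positive factors.

The square of the Gauss sum is elementary; with `p = 2m + 1` and `ζ = exp (2πi/p)`, this identifies
it with `∏_{k=1}^{m} ζ^{km} (ζ^k - 1)` up to a sign. Both sides are polynomials in `ζ`, and their
coefficients at `(ζ - 1)^m`, read modulo `p`, determine that sign by Euler's criterion and Wilson's
theorem.
-/

open Filter Finset Polynomial Topology
open scoped Real

section AbelSummation

variable {E : Type*} [NormedAddCommGroup E] [NormedSpace ℝ E]

theorem norm_sum_range_smul_le_of_antitone {a : ℕ → E} {b : ℕ → ℝ} {C : ℝ}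
    (ha : ∀ n, ‖∑ i ∈ range n, a i‖ ≤ C) (hb : Antitone b) (hb₀ : ∀ n, 0 ≤ b n) (n : ℕ) :
    ‖∑ i ∈ range n, b i • a i‖ ≤ C * b 0 := by
  have by_parts : ∑ i ∈ range n, b i • a i =
      b n • ∑ i ∈ range n, a i + ∑ k ∈ range n, (b k - b (k + 1)) • ∑ i ∈ range (k + 1), a i := by
    induction n with
    | zero => simp
    | succ n ih =>
      rw [sum_range_succ, ih, sum_range_succ a, sum_range_succ (fun k ↦ (b k - b (k + 1)) • _),
        sum_range_succ a]
      module
  calc ‖∑ i ∈ range n, b i • a i‖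
      ≤ b n * C + ∑ k ∈ range n, (b k - b (k + 1)) * C := by
        rw [by_parts]
        refine norm_add_le_of_le ?_ (norm_sum_le_of_le _ fun k _ ↦ ?_)
        · rw [norm_smul, Real.norm_of_nonneg (hb₀ n)]
          exact mul_le_mul_of_nonneg_left (ha n) (hb₀ n)
        · have hk : 0 ≤ b k - b (k + 1) := sub_nonneg.mpr (hb k.le_succ)
          rw [norm_smul, Real.norm_of_nonneg hk]
          exact mul_le_mul_of_nonneg_left (ha _) hk
    _ = C * b 0 := by rw [← sum_mul, sum_range_sub']; ring

theorem tendsto_of_tendsto_sum_smul_antitone {ι : Type*} {l : Filter ι} {a : ℕ → E} {L : E}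
    (ha : Tendsto (fun n ↦ ∑ i ∈ range n, a i) atTop (𝓝 L)) {b : ι → ℕ → ℝ} {F : ι → E}
    (hb : ∀ᶠ t in l, Antitone (b t)) (hb₀ : ∀ᶠ t in l, ∀ n, 0 ≤ b t n)
    (hb₁ : ∀ n, Tendsto (b · n) l (𝓝 1)) (hF : ∀ᶠ t in l, HasSum (fun n ↦ b t n • a n) (F t)) :
    Tendsto F l (𝓝 L) := by
  suffices TendstoUniformlyOnFilter (fun n t ↦ ∑ i ∈ range n, b t i • a i) F atTop l from
    this.tendsto_of_eventually_tendsto (Eventually.of_forall fun n ↦ by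
      simpa using tendsto_finsetSum (range n) fun i _ ↦ (hb₁ i).smul_const (a i)) ha
  rw [Metric.tendstoUniformlyOnFilter_iff]
  intro ε hε
  obtain ⟨N, hN⟩ := Metric.cauchySeq_iff.mp ha.cauchySeq (ε / 3) (by positivity)
  have hb₂ : ∀ᶠ t in l, b t 0 < 2 := (hb₁ 0).eventually_lt_const one_lt_two
  filter_upwards [prod_mem_prod (Ici_mem_atTop N) (hb.and (hb₀.and (hb₂.and hF)))]
  rintro ⟨n, t⟩ ⟨hn, hbt, hbt₀, hbt₂, hFt⟩
  have tail_le (k : ℕ) : dist (∑ i ∈ range (k + n), b t i • a i) (∑ i ∈ range n, b t i • a i)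
      ≤ ε / 3 * b t n := by
    rw [dist_eq_norm, add_comm k, sum_range_add_sub_sum_range]
    refine norm_sum_range_smul_le_of_antitone (a := fun i ↦ a (n + i)) (b := fun i ↦ b t (n + i))
      (fun k ↦ ?_) (fun i j hij ↦ hbt (by lia)) (fun i ↦ hbt₀ _) k
    rw [← sum_range_add_sub_sum_range, ← dist_eq_norm]
    exact (hN _ (le_add_right hn) _ hn).le
  calc dist (F t) (∑ i ∈ range n, b t i • a i)
      ≤ ε / 3 * b t n := le_of_tendsto'
        (((tendsto_add_atTop_iff_nat n).mpr hFt.tendsto_sum_nat).dist tendsto_const_nhds) tail_le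
    _ ≤ ε / 3 * b t 0 := by gcongr; exact hbt n.zero_le
    _ < ε := by linarith [mul_lt_mul_of_pos_left hbt₂ hε]

end AbelSummation

section Positivity

theorem tsum_nonneg_of_summable_norm {f : ℕ →*₀ ℝ} (hf : Summable (‖f ·‖)) : 0 ≤ ∑' n, f n := by
  rw [← EulerProduct.eulerProduct_completely_multiplicative_tprod hf]
  refine tprod_nonneg fun q ↦ inv_nonneg.mpr (sub_nonneg.mpr ?_)
  exact (le_abs_self _).trans (Summable.norm_lt_one (f := f.toMonoidHom) hf.of_norm q.2.one_lt).le

/-- The completely multiplicative function `n ↦ ψ n * n ^ (-s)`, whose sum is the Dirichlet series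
of `ψ` at `s`. -/
noncomputable def twistRpow (ψ : ℕ →*₀ ℝ) (s : ℝ) : ℕ →*₀ ℝ where
  toFun n := ψ n * (n : ℝ) ^ (-s)
  map_zero' := by simp
  map_one' := by simp
  map_mul' m n := by
    rw [map_mul, Nat.cast_mul, Real.mul_rpow m.cast_nonneg n.cast_nonneg]
    ring

theorem summable_norm_twistRpow {ψ : ℕ →*₀ ℝ} (hψ : ∀ n, |ψ n| ≤ 1) {s : ℝ} (hs : 1 < s) :
    Summable (‖twistRpow ψ s ·‖) := by
  refine (Real.summable_nat_rpow.mpr (neg_lt_neg hs)).of_nonneg_of_le (fun _ ↦ norm_nonneg _)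
    fun n ↦ ?_
  calc ‖ψ n * (n : ℝ) ^ (-s)‖ = |ψ n| * (n : ℝ) ^ (-s) := by
        rw [norm_mul, Real.norm_eq_abs, Real.norm_of_nonneg (by positivity)]
    _ ≤ (n : ℝ) ^ (-s) := mul_le_of_le_one_left (by positivity) (hψ n)

theorem nonneg_of_tendsto_sum_div {ψ : ℕ →*₀ ℝ} (hψ : ∀ n, |ψ n| ≤ 1) {L : ℝ}
    (h : Tendsto (fun N ↦ ∑ n ∈ range N, ψ n / n) atTop (𝓝 L)) : 0 ≤ L := by
  have shifted : Tendsto (fun N ↦ ∑ n ∈ range N, ψ (n + 1) / (n + 1)) atTop (𝓝 L) := by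
    simpa [Function.comp_def, sum_range_succ'] using h.comp (tendsto_add_atTop_nat 1)
  have to_L : Tendsto (fun t ↦ ∑' n, twistRpow ψ (1 + t) n) (𝓝[>] 0) (𝓝 L) := by
    refine tendsto_of_tendsto_sum_smul_antitone shifted (b := fun t n ↦ ((n : ℝ) + 1) ^ (-t))
      ?_ (Eventually.of_forall fun t n ↦ by positivity) (fun n ↦ ?_) ?_
    · filter_upwards [self_mem_nhdsWithin] with t (ht : 0 < t) m n hmn
      exact Real.rpow_le_rpow_of_nonpos (by positivity) (by gcongr) (by linarith)
    · refine tendsto_nhdsWithin_of_tendsto_nhds ?_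
      have : ContinuousAt (fun t : ℝ ↦ ((n : ℝ) + 1) ^ (-t)) 0 :=
        (Real.continuousAt_const_rpow (by positivity)).comp continuousAt_neg
      simpa using this.tendsto
    · filter_upwards [self_mem_nhdsWithin] with t (ht : 0 < t)
      have hasSum := (summable_norm_twistRpow hψ (lt_add_of_pos_right 1 ht)).of_norm.hasSum
      rw [← hasSum_nat_add_iff' 1] at hasSum
      convert! hasSum using 2 with n
      · simp [twistRpow, Real.rpow_add (Nat.cast_add_one_pos _), Real.rpow_neg_one]
        ring
      · simp
  refine ge_of_tendsto to_L ?_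
  filter_upwards [self_mem_nhdsWithin] with t (ht : 0 < t)
  exact tsum_nonneg_of_summable_norm (summable_norm_twistRpow hψ (lt_add_of_pos_right 1 ht))

end Positivity

section FourierSeries

theorem norm_geom_sum_le {z : ℂ} (hz : ‖z‖ = 1) (hz₁ : z ≠ 1) (n : ℕ) :
    ‖∑ i ∈ range n, z ^ i‖ ≤ 2 / ‖z - 1‖ := by
  rw [geom_sum_eq hz₁, norm_div]
  gcongr
  calc ‖z ^ n - 1‖ ≤ ‖z ^ n‖ + ‖(1 : ℂ)‖ := norm_sub_le _ _
    _ = 2 := by rw [norm_pow, hz]; norm_num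

theorem cauchySeq_sum_range_pow_div {z : ℂ} (hz : ‖z‖ = 1) (hz₁ : z ≠ 1) :
    CauchySeq fun N ↦ ∑ n ∈ range N, z ^ n / n := by
  have harmonic_antitone : Antitone fun n : ℕ ↦ 1 / ((n : ℝ) + 1) :=
    fun _ _ h ↦ Nat.one_div_le_one_div h
  have bounded (N : ℕ) : ‖∑ n ∈ range N, z ^ (n + 1)‖ ≤ 2 / ‖z - 1‖ := by
    simpa [pow_succ, ← sum_mul, hz] using norm_geom_sum_le hz hz₁ N
  rw [← cauchySeq_shift 1]
  convert! harmonic_antitone.cauchySeq_series_mul_of_tendsto_zero_of_bounded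
    tendsto_one_div_add_atTop_nhds_zero_nat bounded using 2 with N
  simp [sum_range_succ', div_eq_inv_mul]

theorem one_sub_mem_slitPlane {z : ℂ} (hz : ‖z‖ = 1) (hz₁ : z ≠ 1) : 1 - z ∈ Complex.slitPlane := by
  open ComplexOrder in
  refine Complex.mem_slitPlane_iff_not_le_zero.mpr fun h ↦ hz₁ ?_
  simpa [hz] using Complex.eq_coe_norm_of_nonneg (zero_le_one.trans (sub_nonpos.mp h))

theorem tendsto_sum_range_pow_div {z : ℂ} (hz : ‖z‖ = 1) (hz₁ : z ≠ 1) :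
    Tendsto (fun N ↦ ∑ n ∈ range N, z ^ n / n) atTop (𝓝 (-Complex.log (1 - z))) := by
  obtain ⟨L, hL⟩ := cauchySeq_tendsto_of_complete (cauchySeq_sum_range_pow_div hz hz₁)
  have tsum_tendsto_L := tendsto_map'_iff.mp (Complex.tendsto_tsum_powerSeries_nhdsWithin_lt hL)
  have tsum_eq_log : ∀ᶠ r : ℝ in 𝓝[<] 1,
      ∑' n : ℕ, z ^ n / n * (r : ℂ) ^ n = -Complex.log (1 - r * z) := by
    filter_upwards [Ioo_mem_nhdsLT zero_lt_one] with r hr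
    have hrz : ‖r * z‖ < 1 := by simpa [hz, abs_of_pos hr.1] using hr.2
    rw [← (Complex.hasSum_taylorSeries_neg_log hrz).tsum_eq]
    exact tsum_congr fun n ↦ by ring
  have log_tendsto : Tendsto (fun r : ℝ ↦ -Complex.log (1 - r * z)) (𝓝[<] 1)
      (𝓝 (-Complex.log (1 - z))) := by
    have : ContinuousAt (fun r : ℝ ↦ -Complex.log (1 - r * z)) 1 :=
      (ContinuousAt.clog (by fun_prop) (by simpa using one_sub_mem_slitPlane hz hz₁)).neg
    simpa using tendsto_nhdsWithin_of_tendsto_nhds this.tendsto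
  rwa [tendsto_nhds_unique (tsum_tendsto_L.congr' tsum_eq_log) log_tendsto] at hL

theorem one_sub_exp_two_mul_mul_I (θ : ℂ) :
    1 - Complex.exp (2 * θ * Complex.I) =
      -(2 * Complex.sin θ * Complex.I * Complex.exp (θ * Complex.I)) := by
  rw [Complex.exp_mul_I, Complex.exp_mul_I, Complex.cos_two_mul_eq_one_sub, Complex.sin_two_mul]
  linear_combination 2 * Complex.sin θ ^ 2 * Complex.I_sq

theorem arg_one_sub_exp_two_pi_mul_I {x : ℝ} (hx₀ : 0 < x) (hx₁ : x < 1) :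
    (1 - Complex.exp (2 * π * x * Complex.I)).arg = -(π * (1 / 2 - x)) := by
  have sin_pos : 0 < Real.sin (π * x) :=
    Real.sin_pos_of_pos_of_lt_pi (by positivity) (by nlinarith [Real.pi_pos])
  have polar : 1 - Complex.exp (2 * π * x * Complex.I) =
      (2 * Real.sin (π * x) : ℝ) * (Complex.cos (-(π * (1 / 2 - x)) : ℝ) +
        Complex.sin (-(π * (1 / 2 - x)) : ℝ) * Complex.I) := by
    have shift : -(π * (1 / 2 - x)) = π * x - π / 2 := by ring
    rw [mul_assoc 2, one_sub_exp_two_mul_mul_I, Complex.exp_mul_I, shift]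
    push_cast
    rw [Complex.cos_sub_pi_div_two, Complex.sin_sub_pi_div_two]
    linear_combination -2 * Complex.sin (π * x) ^ 2 * Complex.I_sq
  rw [polar, Complex.arg_mul_cos_add_sin_mul_I (by positivity)]
  constructor <;> nlinarith [Real.pi_pos]

theorem tendsto_sum_range_sin_div {x : ℝ} (hx : Int.fract x ≠ 0) :
    Tendsto (fun N ↦ ∑ n ∈ range N, Real.sin (2 * π * n * x) / n) atTop
      (𝓝 (π * (1 / 2 - Int.fract x))) := by
  have exp_fract : Complex.exp (2 * π * x * Complex.I) =
      Complex.exp (2 * π * Int.fract x * Complex.I) := by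
    refine Complex.exp_eq_exp_iff_exists_int.mpr ⟨⌊x⌋, ?_⟩
    rw [← Int.self_sub_floor]
    push_cast
    ring
  have arg_eq := arg_one_sub_exp_two_pi_mul_I ((Int.fract_nonneg x).lt_of_ne' hx)
    (Int.fract_lt_one x)
  rw [← exp_fract] at arg_eq
  have norm_eq : ‖Complex.exp (2 * π * x * Complex.I)‖ = 1 := by simp [Complex.norm_exp]
  have ne_one : Complex.exp (2 * π * x * Complex.I) ≠ 1 := by
    intro h
    obtain ⟨n, hn⟩ := Complex.exp_eq_one_iff.mp h
    have : x = n := by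
      have := mul_left_cancel₀ Complex.two_pi_I_ne_zero
        (a := (2 * π * Complex.I)) (b := (x : ℂ)) (c := n) (by linear_combination hn)
      exact_mod_cast this
    simp [this] at hx
  have im_tendsto := (Complex.continuous_im.tendsto _).comp
    (tendsto_sum_range_pow_div norm_eq ne_one)
  rw [Complex.neg_im, Complex.log_im, arg_eq, neg_neg] at im_tendsto
  refine im_tendsto.congr fun N ↦ ?_
  rw [Function.comp_apply, Complex.im_sum]
  refine sum_congr rfl fun n _ ↦ ?_
  have : Complex.exp (2 * π * x * Complex.I) ^ n =
      Complex.exp ((2 * π * n * x : ℝ) * Complex.I) := by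
    rw [← Complex.exp_nat_mul]
    push_cast
    ring_nf
  rw [Complex.div_natCast_im, this, Complex.exp_ofReal_mul_I_im]

theorem fract_sub_of_mem_Ioo {x t : ℝ} (hx₀ : 0 < x) (hx₁ : x < 1) (ht₀ : 0 ≤ t) (ht₁ : t < 1) :
    Int.fract (x - t) = x - t + if x < t then 1 else 0 := by
  split_ifs with h
  · exact Int.fract_eq_iff.mpr ⟨by linarith, by linarith, -1, by push_cast; ring⟩
  · exact Int.fract_eq_iff.mpr ⟨by linarith, by linarith, 0, by push_cast; ring⟩

theorem tendsto_sum_range_sin_sub_sin_div {x t : ℝ} (hx₀ : 0 < x) (hx₁ : x < 1) (ht₀ : 0 ≤ t)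
    (ht₁ : t < 1) (hxt : x ≠ t) :
    Tendsto (fun N ↦ ∑ n ∈ range N,
        (Real.sin (2 * π * n * x) - Real.sin (2 * π * n * (x - t))) / n) atTop
      (𝓝 (π * ((if x < t then 1 else 0) - t))) := by
  have fract_x : Int.fract x = x := Int.fract_eq_self.mpr ⟨hx₀.le, hx₁⟩
  have fract_sub := fract_sub_of_mem_Ioo hx₀ hx₁ ht₀ ht₁
  have fract_sub_ne : Int.fract (x - t) ≠ 0 := by
    rw [fract_sub]
    split_ifs with h
    · linarith
    · simpa [sub_eq_zero] using hxt
  convert (tendsto_sum_range_sin_div (fract_x.trans_ne hx₀.ne')).sub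
    (tendsto_sum_range_sin_div fract_sub_ne) using 2 with N
  · simp only [sub_div, sum_sub_distrib]
  · rw [fract_x, fract_sub]
    ring

theorem tendsto_sum_range_sum_sin_sub_sin_div {ι : Type*} {s : Finset ι} {x : ι → ℝ} (f : ι → ℝ)
    (hx₀ : ∀ a ∈ s, 0 < x a) (hx₁ : ∀ a ∈ s, x a < 1) {t : ℝ} (ht₀ : 0 ≤ t) (ht₁ : t < 1)
    (hxt : ∀ a ∈ s, x a ≠ t) :
    Tendsto (fun N ↦ ∑ n ∈ range N, (∑ a ∈ s, f a *
        (Real.sin (2 * π * n * x a) - Real.sin (2 * π * n * (x a - t)))) / n) atTop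
      (𝓝 (π * (∑ a ∈ s with x a < t, f a - t * ∑ a ∈ s, f a))) := by
  convert tendsto_finsetSum s fun a ha ↦ (tendsto_sum_range_sin_sub_sin_div (hx₀ a ha) (hx₁ a ha)
    ht₀ ht₁ (hxt a ha)).const_mul (f a) using 2 with N
  · simp only [mul_sum, sum_div, mul_div_assoc]
    exact sum_comm
  · rw [sum_filter, mul_sum, ← sum_sub_distrib, mul_sum]
    refine sum_congr rfl fun a _ ↦ ?_
    split_ifs <;> ring

end FourierSeries

section Sign

theorem sum_eval_eq_neg_coeff {F : Type*} [Field F] [Fintype F] {f : F[X]}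
    (hf : f.natDegree ≤ Fintype.card F - 1) :
    ∑ x, f.eval x = -f.coeff (Fintype.card F - 1) := by
  have top_sum : ∑ x : F, x ^ (Fintype.card F - 1) = -1 := by
    classical
    have pow_eq (x : F) : x ^ (Fintype.card F - 1) = 1 - if x = 0 then 1 else 0 := by
      split_ifs with hx
      · rw [hx, zero_pow (Nat.sub_ne_zero_of_lt Fintype.one_lt_card), sub_self]
      · rw [FiniteField.pow_card_sub_one_eq_one x hx, sub_zero]
    simp [pow_eq]
  simp_rw [eval_eq_sum_range' (Nat.lt_succ_of_le hf)]
  rw [sum_comm]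
  simp_rw [← mul_sum]
  rw [sum_range_succ, top_sum, sum_eq_zero fun i hi ↦ ?_, zero_add, mul_neg_one]
  rw [FiniteField.sum_pow_lt_card_sub_one F i (mem_range.mp hi), mul_zero]

theorem sum_pow_mul_descPochhammer_eval {F : Type*} [Field F] [Fintype F] {m : ℕ}
    (hm : Fintype.card F = 2 * m + 1) :
    ∑ x : F, x ^ m * (descPochhammer F m).eval x = -1 := by
  have monic : (X ^ m * descPochhammer F m).Monic :=
    (monic_X_pow m).mul (monic_descPochhammer F m)
  have natDegree_eq : (X ^ m * descPochhammer F m).natDegree = Fintype.card F - 1 := by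
    rw [(monic_X_pow m).natDegree_mul (monic_descPochhammer F m), natDegree_X_pow,
      descPochhammer_natDegree]
    lia
  simpa [← natDegree_eq, monic.coeff_natDegree] using sum_eval_eq_neg_coeff natDegree_eq.le

theorem X_sub_one_pow_dvd_map_of_aeval_eq_zero {K : Type*} [Field K] [CharZero K]
    {p : ℕ} [hp : Fact p.Prime] {ζ : K} (hζ : IsPrimitiveRoot ζ p) {F : ℤ[X]} (hF : aeval ζ F = 0) :
    (X - 1) ^ (p - 1) ∣ F.map (Int.castRingHom (ZMod p)) := by
  have cyclotomic_dvd : cyclotomic p ℤ ∣ F := by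
    rw [cyclotomic_eq_minpoly hζ hp.out.pos]
    exact minpoly.isIntegrallyClosed_dvd (hζ.isIntegral hp.out.pos) hF
  have cyclotomic_mod : cyclotomic p (ZMod p) = (X - 1) ^ (p - 1) := by
    simpa using cyclotomic_mul_prime_eq_pow_of_not_dvd (ZMod p) (n := 1) hp.out.not_dvd_one
  rw [← cyclotomic_mod, ← map_cyclotomic p (Int.castRingHom (ZMod p))]
  exact Polynomial.map_dvd _ cyclotomic_dvd

theorem coeff_taylor_one_eq_zero_of_pow_dvd {R : Type*} [CommRing R] {F : R[X]} {k n : ℕ}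
    (h : (X - 1) ^ k ∣ F) (hn : n < k) : (taylor 1 F).coeff n = 0 := by
  obtain ⟨G, rfl⟩ := h
  have : taylor 1 ((X - 1 : R[X]) ^ k * G) = X ^ k * taylor 1 G := by
    simp [taylor_mul, taylor_pow]
  rw [this, coeff_X_pow_mul', if_neg hn.not_ge]

theorem coeff_taylor_one_X_pow {R : Type*} [CommRing R] (a n : ℕ) :
    (taylor (1 : R) (X ^ a)).coeff n = a.choose n := by
  simp [coeff_X_add_one_pow]

theorem coeff_taylor_one_prod {R : Type*} [CommRing R] (m : ℕ) (e : ℕ → ℕ) :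
    (taylor (1 : R) (∏ k ∈ range m, X ^ e k * (X ^ (k + 1) - 1))).coeff m = m.factorial := by
  have factor : ∏ k ∈ range m, (X ^ e k * (X ^ (k + 1) - 1) : R[X]) =
      (X - 1) ^ m * ∏ k ∈ range m, X ^ e k * ∑ i ∈ range (k + 1), X ^ i := by
    rw [← card_range m, ← prod_const, card_range, ← prod_mul_distrib]
    exact prod_congr rfl fun k _ ↦ by rw [← mul_geom_sum]; ring
  have : taylor (1 : R) (∏ k ∈ range m, X ^ e k * (X ^ (k + 1) - 1)) =
      X ^ m * taylor (1 : R) (∏ k ∈ range m, X ^ e k * ∑ i ∈ range (k + 1), X ^ i) := by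
    rw [factor, taylor_mul]
    simp
  rw [this, coeff_X_pow_mul', if_pos le_rfl, Nat.sub_self, taylor_coeff_zero, eval_prod]
  simp [eval_finsetSum, ← prod_range_add_one_eq_factorial]

section ZModPrime

variable {p m : ℕ} [Fact p.Prime] (hm : p = 2 * m + 1)
include hm

theorem sum_pow_mul_choose_mul_factorial :
    (∑ a : ZMod p, a ^ m * (a.val.choose m : ZMod p)) * (m.factorial : ZMod p) = -1 := by
  rw [sum_mul, ← sum_pow_mul_descPochhammer_eval (by rw [ZMod.card, hm])]
  refine sum_congr rfl fun a _ ↦ ?_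
  nth_rw 4 [← ZMod.natCast_zmod_val a]
  rw [descPochhammer_eval_eq_descFactorial, Nat.descFactorial_eq_factorial_mul_choose]
  push_cast
  ring

theorem factorial_half_ne_zero : (m.factorial : ZMod p) ≠ 0 := by
  rw [Ne, ZMod.natCast_eq_zero_iff, (Fact.out : p.Prime).dvd_factorial]
  lia

theorem factorial_half_sq : (m.factorial : ZMod p) ^ 2 = (-1) ^ (m + 1) := by
  have cast_pred : ((p - 1 : ℕ) : ZMod p) = -1 := by
    rw [Nat.cast_pred (Fact.out : p.Prime).pos, CharP.cast_eq_zero, zero_sub]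
  have cast_desc : ((p - 1).descFactorial m : ZMod p) = (-1) ^ m * m.factorial := by
    rw [← descPochhammer_eval_eq_descFactorial, cast_pred, descPochhammer_eval_eq_prod_range,
      ← prod_range_add_one_eq_factorial, Nat.cast_prod, ← card_range m, ← prod_const,
      card_range, ← prod_mul_distrib]
    exact prod_congr rfl fun k _ ↦ by push_cast; ring
  have wilson := ZMod.wilsons_lemma p
  rw [← Nat.factorial_mul_descFactorial (show m ≤ p - 1 by lia), show p - 1 - m = m by lia,
    Nat.cast_mul, cast_desc] at wilson
  have sq_sign : ((-1 : ZMod p) ^ m) ^ 2 = 1 := by rw [pow_right_comm, neg_one_sq, one_pow]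
  linear_combination (-1) ^ m * wilson - (m.factorial : ZMod p) ^ 2 * sq_sign

theorem sum_quadraticChar_mul_choose :
    ∑ a : ZMod p, ((quadraticChar (ZMod p) a : ℤ) : ZMod p) * (a.val.choose m : ZMod p) =
      (-1) ^ m * m.factorial := by
  have euler (a : ZMod p) : ((quadraticChar (ZMod p) a : ℤ) : ZMod p) = a ^ m := by
    rw [quadraticChar_eq_pow_of_char_ne_two' (by rw [ZMod.ringChar_zmod_n]; lia), ZMod.card,
      show p / 2 = m by lia]
  refine mul_right_cancel₀ (factorial_half_ne_zero hm) ?_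
  simp_rw [euler]
  rw [sum_pow_mul_choose_mul_factorial hm, mul_assoc, ← sq, factorial_half_sq hm, pow_succ,
    mul_neg_one, mul_neg, ← sq, pow_right_comm, neg_one_sq, one_pow]

theorem sign_eq_of_sum_quadraticChar_mul_pow {K : Type*} [Field K] [CharZero K] {ζ : K}
    (hζ : IsPrimitiveRoot ζ p) {ε : ℤ} (hε : ε = 1 ∨ ε = -1) {e : ℕ → ℕ}
    (h : ∑ a : ZMod p, (quadraticChar (ZMod p) a : K) * ζ ^ a.val =
      ε * ∏ k ∈ range m, ζ ^ e k * (ζ ^ (k + 1) - 1)) :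
    ε = (-1) ^ m := by
  let F : ℤ[X] := ∑ a : ZMod p, C (quadraticChar (ZMod p) a) * X ^ a.val -
    C ε * ∏ k ∈ range m, X ^ e k * (X ^ (k + 1) - 1)
  have aeval_F : aeval ζ F = 0 := by simp [F, map_prod, h, -quadraticChar_apply]
  have map_F : F.map (Int.castRingHom (ZMod p)) =
      ∑ a : ZMod p, C ((quadraticChar (ZMod p) a : ℤ) : ZMod p) * X ^ a.val -
        C (ε : ZMod p) * ∏ k ∈ range m, X ^ e k * (X ^ (k + 1) - 1) := by
    simp [F, Polynomial.map_sum, Polynomial.map_prod]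
  have coeff_eq_zero : (taylor 1 (F.map (Int.castRingHom (ZMod p)))).coeff m = 0 :=
    coeff_taylor_one_eq_zero_of_pow_dvd (X_sub_one_pow_dvd_map_of_aeval_eq_zero hζ aeval_F)
      (by have := (Fact.out : p.Prime).two_le; lia)
  have sign_mod_p : (ε : ZMod p) = ((-1) ^ m : ℤ) := by
    simp only [map_F, map_sub, map_sum, coeff_sub, finsetSum_coeff, taylor_mul, taylor_C,
      coeff_C_mul, coeff_taylor_one_X_pow, coeff_taylor_one_prod] at coeff_eq_zero
    rw [sum_quadraticChar_mul_choose hm, sub_eq_zero] at coeff_eq_zero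
    push_cast
    exact (mul_right_cancel₀ (factorial_half_ne_zero hm) coeff_eq_zero).symm
  refine Int.cast_injOn_of_ringChar_ne_two (by rw [ZMod.ringChar_zmod_n]; lia) ?_ ?_ sign_mod_p
  · rcases hε with rfl | rfl <;> simp
  · rcases neg_one_pow_eq_or ℤ m with h | h <;> simp [h]

end ZModPrime

end Sign

section GaussSum

theorem prod_range_norm_pow_sub_one {ζ : ℂ} {m : ℕ} (hζ : IsPrimitiveRoot ζ (2 * m + 1)) :
    ∏ k ∈ range m, ‖ζ ^ (k + 1) - 1‖ = √(2 * m + 1) := by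
  have norm_reflect (k : ℕ) (hk : k ∈ range m) :
      ‖1 - ζ ^ (m + (m - 1 - k) + 1)‖ = ‖ζ ^ (k + 1) - 1‖ := by
    have hk : k < m := mem_range.mp hk
    have norm_ζ : ‖ζ ^ (k + 1)‖ = 1 := by
      rw [norm_pow, hζ.norm'_eq_one (by lia), one_pow]
    have hpow : ζ ^ (k + 1) * ζ ^ (m + (m - 1 - k) + 1) = 1 := by
      rw [← pow_add, ← hζ.pow_eq_one]
      congr 1
      lia
    rw [← one_mul ‖1 - _‖, ← norm_ζ, ← norm_mul, mul_sub, mul_one, hpow]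
  have sq_eq : (∏ k ∈ range m, ‖ζ ^ (k + 1) - 1‖) ^ 2 = 2 * m + 1 := by
    have norm_prod_eq := congrArg norm hζ.prod_one_sub_pow_eq_order
    rw [norm_prod, two_mul, prod_range_add, ← prod_range_reflect (fun k ↦ ‖1 - ζ ^ (m + k + 1)‖),
      prod_congr rfl norm_reflect, ← two_mul] at norm_prod_eq
    simp_rw [norm_sub_rev (1 : ℂ)] at norm_prod_eq
    rw [sq, norm_prod_eq]
    norm_cast
  rw [← sq_eq, Real.sqrt_sq (prod_nonneg fun _ _ ↦ norm_nonneg _)]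

theorem exp_pow_mul_pow_sub_one {m k : ℕ} (hk : k < m) {ζ : ℂ}
    (hζ : ζ = Complex.exp (2 * π * Complex.I / (2 * m + 1 : ℕ))) :
    ζ ^ ((k + 1) * m) * (ζ ^ (k + 1) - 1) = (-1) ^ (k + 1) * Complex.I * ‖ζ ^ (k + 1) - 1‖ := by
  set θ : ℝ := π * (k + 1) / (2 * m + 1) with hθ
  have sin_nonneg : 0 ≤ Real.sin θ :=
    Real.sin_nonneg_of_nonneg_of_le_pi (by positivity) (by
      rw [hθ, div_le_iff₀ (by positivity)]
      have : (k : ℝ) + 1 ≤ m := by exact_mod_cast hk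
      nlinarith [Real.pi_pos])
  have pow_eq : ζ ^ (k + 1) = Complex.exp (2 * θ * Complex.I) := by
    rw [hζ, ← Complex.exp_nat_mul, hθ]
    push_cast
    ring_nf
  have sub_one_eq : ζ ^ (k + 1) - 1 =
      (2 * Real.sin θ : ℝ) * (Complex.I * Complex.exp (θ * Complex.I)) := by
    rw [pow_eq, ← neg_sub, one_sub_exp_two_mul_mul_I]
    push_cast
    ring
  have norm_eq : ‖ζ ^ (k + 1) - 1‖ = 2 * Real.sin θ := by
    rw [sub_one_eq, norm_mul, norm_mul, Complex.norm_I, Complex.norm_exp_ofReal_mul_I,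
      Complex.norm_of_nonneg (by positivity), one_mul, mul_one]
  have sign :
      Complex.exp (2 * θ * Complex.I) ^ m * Complex.exp (θ * Complex.I) = (-1) ^ (k + 1) := by
    rw [← Complex.exp_nat_mul, ← Complex.exp_add, ← Complex.exp_pi_mul_I, ← Complex.exp_nat_mul]
    have : (θ : ℂ) * (2 * m + 1) = π * (k + 1) := by
      rw [hθ]
      exact_mod_cast div_mul_cancel₀ (π * (k + 1)) (by positivity)
    congr 1
    push_cast
    linear_combination Complex.I * this
  rw [norm_eq, pow_mul, sub_one_eq, pow_eq, ← sign]
  ring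

theorem prod_range_neg_one_pow_mul_I (m : ℕ) :
    ∏ k ∈ range m, ((-1) ^ k * Complex.I) = Complex.I ^ m ^ 2 := by
  induction m with
  | zero => simp
  | succ m ih =>
    rw [prod_range_succ, ih, ← Complex.I_sq]
    ring

theorem prod_range_exp_pow_mul_pow_sub_one {m : ℕ} {ζ : ℂ}
    (hζ : ζ = Complex.exp (2 * π * Complex.I / (2 * m + 1 : ℕ))) :
    ∏ k ∈ range m, ζ ^ ((k + 1) * m) * (ζ ^ (k + 1) - 1) =
      (-1) ^ m * Complex.I ^ m ^ 2 * √(2 * m + 1 : ℕ) := by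
  have hζ_prim : IsPrimitiveRoot ζ (2 * m + 1) := hζ ▸ Complex.isPrimitiveRoot_exp _ (by lia)
  have sign_eq : ∏ k ∈ range m, ((-1) ^ (k + 1) * Complex.I) = (-1) ^ m * Complex.I ^ m ^ 2 := by
    simp_rw [pow_succ' (-1 : ℂ), mul_assoc]
    rw [prod_mul_distrib, prod_const, card_range, prod_range_neg_one_pow_mul_I]
  rw [prod_congr rfl fun k hk ↦ exp_pow_mul_pow_sub_one (mem_range.mp hk) hζ, prod_mul_distrib,
    sign_eq, ← Complex.ofReal_prod, prod_range_norm_pow_sub_one hζ_prim]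
  push_cast
  rfl

theorem gaussSum_mulShift_of_isQuadratic {F R : Type*} [Field F] [Fintype F] [CommRing R]
    [IsDomain R] {χ : MulChar F R} (hχ : χ ≠ 1) (hχ₂ : χ.IsQuadratic) (ψ : AddChar F R) (a : F) :
    gaussSum χ (ψ.mulShift a) = χ a * gaussSum χ ψ := by
  by_cases ha : a = 0
  · simp [ha, gaussSum, MulChar.sum_eq_zero_of_ne_one hχ, χ.map_zero]
  · have := gaussSum_mulShift χ ψ (Units.mk0 a ha)
    rw [Units.val_mk0] at this
    rw [← this, ← mul_assoc, ← sq, ← MulChar.pow_apply' _ two_ne_zero, hχ₂.sq_eq_one,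
      MulChar.one_apply (isUnit_iff_ne_zero.mpr ha), one_mul]

theorem sum_Ico_one_natCast_zmod {M : Type*} [AddCommMonoid M] {N : ℕ} [NeZero N] {f : ZMod N → M}
    (hf : f 0 = 0) : ∑ i ∈ Ico 1 N, f i = ∑ a, f a := by
  rw [← sum_erase univ hf]
  refine sum_nbij' (fun i ↦ (i : ZMod N)) ZMod.val ?_ ?_ ?_ ?_ ?_
  · intro i hi
    rw [mem_Ico] at hi
    have := ZMod.natCast_eq_zero_iff i N |>.not.mpr (Nat.not_dvd_of_pos_of_lt hi.1 hi.2)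
    simpa
  · intro a ha
    simpa [Nat.one_le_iff_ne_zero, ZMod.val_lt] using ha
  · intro i hi
    exact ZMod.val_cast_of_lt (mem_Ico.mp hi).2
  · simp
  · simp

theorem sin_sub_sin_sub (x y : ℝ) : Real.sin x - Real.sin (x - y) =
    (Complex.exp (x * Complex.I) * (1 - Complex.exp (-y * Complex.I))).im := by
  rw [mul_sub, mul_one, ← Complex.exp_add, ← add_mul, ← sub_eq_add_neg, ← Complex.ofReal_sub,
    Complex.sub_im, Complex.exp_ofReal_mul_I_im, Complex.exp_ofReal_mul_I_im]

/-- The Legendre symbol modulo `p` as a complex valued multiplicative character. -/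
noncomputable def legendreChar (p : ℕ) [Fact p.Prime] : MulChar (ZMod p) ℂ :=
  (quadraticChar (ZMod p)).ringHomComp (Int.castRingHom ℂ)

section LegendreChar

variable (p : ℕ) [Fact p.Prime]

theorem legendreChar_apply (a : ZMod p) : legendreChar p a = (quadraticChar (ZMod p) a : ℂ) := rfl

theorem legendreChar_natCast (n : ℕ) : legendreChar p n = (legendreSym p n : ℂ) := by
  simp [legendreChar_apply, legendreSym]

theorem legendreChar_isQuadratic : (legendreChar p).IsQuadratic :=
  (quadraticChar_isQuadratic (ZMod p)).comp _

variable {p} (hp : p ≠ 2)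
include hp

theorem legendreChar_ne_one : legendreChar p ≠ 1 :=
  (MulChar.ringHomComp_ne_one_iff Int.cast_injective).mpr
    (quadraticChar_ne_one (by rwa [ZMod.ringChar_zmod_n]))

theorem gaussSum_legendreChar_sq :
    gaussSum (legendreChar p) ZMod.stdAddChar ^ 2 = (-1) ^ (p / 2) * p := by
  have odd : p % 2 = 1 := (Fact.out : p.Prime).mod_two_eq_one_iff_ne_two.mpr hp
  rw [gaussSum_sq (χ := legendreChar p) (legendreChar_ne_one hp) (legendreChar_isQuadratic p)
    (ZMod.isPrimitive_stdAddChar p), legendreChar_apply,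
    quadraticChar_neg_one (by rwa [ZMod.ringChar_zmod_n]), ZMod.card, ZMod.χ₄_eq_neg_one_pow odd]
  push_cast
  rfl

theorem gaussSum_legendreChar :
    gaussSum (legendreChar p) ZMod.stdAddChar = Complex.I ^ (p / 2) ^ 2 * √p := by
  obtain ⟨m, hm⟩ := (Fact.out : p.Prime).odd_of_ne_two hp
  have half_eq : p / 2 = m := by lia
  set ζ : ℂ := Complex.exp (2 * π * Complex.I / p) with hζ
  have hζ_prim : IsPrimitiveRoot ζ p := Complex.isPrimitiveRoot_exp p (NeZero.ne p)
  set P : ℂ := ∏ k ∈ range m, ζ ^ ((k + 1) * m) * (ζ ^ (k + 1) - 1) with hP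
  have P_eq : P = (-1) ^ m * Complex.I ^ m ^ 2 * √p := by
    rw [hP, prod_range_exp_pow_mul_pow_sub_one (by rw [hζ, hm]), ← hm]
  have gauss_eq : gaussSum (legendreChar p) ZMod.stdAddChar =
      ∑ a : ZMod p, (quadraticChar (ZMod p) a : ℂ) * ζ ^ a.val := by
    refine sum_congr rfl fun a _ ↦ ?_
    rw [legendreChar_apply, ZMod.stdAddChar_apply, ZMod.toCircle_apply, ← Complex.exp_nat_mul]
    ring_nf
  have sq_eq : gaussSum (legendreChar p) ZMod.stdAddChar ^ 2 = P ^ 2 := by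
    have parity : (-1 : ℂ) ^ m ^ 2 = (-1) ^ m := neg_one_pow_congr (by simp [Nat.even_pow])
    rw [gaussSum_legendreChar_sq hp, P_eq, half_eq, mul_pow, mul_pow, pow_right_comm _ m,
      pow_right_comm _ (m ^ 2), Complex.I_sq, parity, ← Complex.ofReal_pow,
      Real.sq_sqrt p.cast_nonneg]
    simp
  obtain ⟨ε, hε, gauss_eq_mul⟩ : ∃ ε : ℤ, (ε = 1 ∨ ε = -1) ∧
      gaussSum (legendreChar p) ZMod.stdAddChar = ε * P := by
    rcases sq_eq_sq_iff_eq_or_eq_neg.mp sq_eq with h | h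
    · exact ⟨1, by simp, by simp [h]⟩
    · exact ⟨-1, by simp, by simp [h]⟩
  have sign := sign_eq_of_sum_quadraticChar_mul_pow hm hζ_prim hε (gauss_eq ▸ gauss_eq_mul)
  rw [gauss_eq_mul, sign, P_eq, half_eq, ← mul_assoc, ← mul_assoc]
  push_cast
  rw [← mul_pow, neg_one_mul, neg_neg, one_pow, one_mul]

theorem sum_Ico_one_legendreSym : ∑ a ∈ Ico 1 p, legendreSym p a = 0 := by
  simp_rw [legendreSym, Int.cast_natCast]
  rw [sum_Ico_one_natCast_zmod (MulChar.map_zero (quadraticChar (ZMod p))),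
    quadraticChar_sum_zero (by rwa [ZMod.ringChar_zmod_n])]

theorem sum_Ico_one_legendreSym_mul_exp (n : ℕ) :
    ∑ a ∈ Ico 1 p, (legendreSym p a : ℂ) * Complex.exp (2 * π * n * (a / p) * Complex.I) =
      legendreSym p n * (Complex.I ^ (p / 2) ^ 2 * √p) := by
  rw [← gaussSum_legendreChar hp, ← legendreChar_natCast, ← gaussSum_mulShift_of_isQuadratic
    (χ := legendreChar p) (legendreChar_ne_one hp) (legendreChar_isQuadratic p), gaussSum,
    ← sum_Ico_one_natCast_zmod (by simp [MulChar.map_zero])]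
  refine sum_congr rfl fun a _ ↦ ?_
  rw [legendreChar_natCast, AddChar.mulShift_apply, ← Nat.cast_mul, ← Int.cast_natCast (n * a),
    ZMod.stdAddChar_coe]
  push_cast
  ring_nf

theorem sum_Ico_one_legendreSym_mul_sin_sub_sin (t : ℝ) (n : ℕ) :
    ∑ a ∈ Ico 1 p, (legendreSym p a : ℝ) * (Real.sin (2 * π * n * (a / p)) -
        Real.sin (2 * π * n * (a / p - t))) =
      legendreSym p n * √p * (Complex.I ^ (p / 2) ^ 2 *
        (1 - Complex.exp (-(2 * π * n * t : ℝ) * Complex.I))).im := by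
  set w := 1 - Complex.exp (-(2 * π * n * t : ℝ) * Complex.I) with hw
  have summand_eq (a : ℕ) : (legendreSym p a : ℝ) * (Real.sin (2 * π * n * (a / p)) -
        Real.sin (2 * π * n * (a / p - t))) =
      ((legendreSym p a : ℂ) * Complex.exp (2 * π * n * (a / p) * Complex.I) * w).im := by
    rw [mul_sub _ (a / p : ℝ), sin_sub_sin_sub, ← hw, mul_assoc (_ : ℂ) _ w,
      ← Complex.ofReal_intCast, Complex.im_ofReal_mul]
    push_cast
    rfl
  rw [sum_congr rfl fun a _ ↦ summand_eq a, ← Complex.im_sum, ← sum_mul,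
    sum_Ico_one_legendreSym_mul_exp hp, ← Complex.im_ofReal_mul]
  congr 1
  push_cast
  ring

end LegendreChar

end GaussSum

theorem legendreSym_three_natCast (n : ℕ) :
    legendreSym 3 n = if n % 3 = 0 then 0 else if n % 3 = 1 then 1 else -1 := by
  rw [legendreSym.mod, ← Int.natCast_mod]
  have := n.mod_lt three_pos
  interval_cases n % 3 <;> decide

theorem two_pi_mul_div_eq_mod_add (n : ℕ) {N : ℕ} (hN : N ≠ 0) :
    2 * π * n / N = 2 * π * (n % N : ℕ) / N + (n / N : ℕ) * (2 * π) := by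
  have : (n : ℝ) = N * (n / N : ℕ) + (n % N : ℕ) := by exact_mod_cast (n.div_add_mod N).symm
  field_simp
  linarith

theorem cos_two_pi_mul_div_three (n : ℕ) :
    Real.cos (2 * π * n / (3 : ℕ)) = 1 - 3 / 2 * (legendreSym 3 n : ℝ) ^ 2 := by
  have cos_one : Real.cos (2 * π / 3) = -1 / 2 := by
    rw [show 2 * π / 3 = π - π / 3 by ring, Real.cos_pi_sub,
      Real.cos_pi_div_three]
    ring
  have cos_two : Real.cos (2 * π * 2 / 3) = -1 / 2 := by
    rw [show 2 * π * 2 / 3 = π / 3 + π by ring, Real.cos_add_pi,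
      Real.cos_pi_div_three]
    ring
  rw [two_pi_mul_div_eq_mod_add n three_ne_zero, Real.cos_add_nat_mul_two_pi,
    legendreSym_three_natCast]
  have := n.mod_lt three_pos
  interval_cases n % 3 <;> norm_num [cos_one, cos_two]

theorem sin_two_pi_mul_div_three (n : ℕ) :
    Real.sin (2 * π * n / (3 : ℕ)) = √3 / 2 * legendreSym 3 n := by
  have sin_one : Real.sin (2 * π / 3) = √3 / 2 := by
    rw [show 2 * π / 3 = π - π / 3 by ring, Real.sin_pi_sub,
      Real.sin_pi_div_three]
  have sin_two : Real.sin (2 * π * 2 / 3) = -(√3 / 2) := by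
    rw [show 2 * π * 2 / 3 = π / 3 + π by ring, Real.sin_add_pi,
      Real.sin_pi_div_three]
  rw [two_pi_mul_div_eq_mod_add n three_ne_zero, Real.sin_add_nat_mul_two_pi,
    legendreSym_three_natCast]
  have := n.mod_lt three_pos
  interval_cases n % 3 <;> norm_num [sin_one, sin_two]

theorem one_sub_exp_neg_two_pi_mul_third (n : ℕ) :
    1 - Complex.exp (-(2 * π * n * (1 / 3) : ℝ) * Complex.I) =
      (3 / 2 * (legendreSym 3 n : ℝ) ^ 2 : ℝ) + (√3 / 2 * legendreSym 3 n : ℝ) * Complex.I := by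
  have third : 2 * π * n * (1 / 3) = 2 * π * n / (3 : ℕ) := by
    push_cast
    ring
  rw [third, ← Complex.ofReal_neg, Complex.exp_mul_I, ← Complex.ofReal_cos, ← Complex.ofReal_sin,
    Real.cos_neg, Real.sin_neg, cos_two_pi_mul_div_three, sin_two_pi_mul_div_three]
  push_cast
  ring

/-- The Legendre symbol modulo `p` as a real valued completely multiplicative function on `ℕ`. -/
noncomputable def legendreHom (p : ℕ) [Fact p.Prime] : ℕ →*₀ ℝ :=
  (Int.castRingHom ℝ).toMonoidWithZeroHom.comp
    ((legendreSym.hom p).comp (Nat.castRingHom ℤ).toMonoidWithZeroHom)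

theorem legendreHom_apply (p : ℕ) [Fact p.Prime] (n : ℕ) : legendreHom p n = legendreSym p n := rfl

theorem abs_legendreHom_le_one (p : ℕ) [Fact p.Prime] (n : ℕ) : |legendreHom p n| ≤ 1 := by
  rw [legendreHom_apply]
  rcases quadraticChar_isQuadratic (ZMod p) n with h | h | h <;> simp [legendreSym, h]

theorem exists_sum_Ico_one_legendreSym_mul_sin_sub_sin_eq {p : ℕ} [Fact p.Prime] (hp : p ≠ 2) :
    ∃ ψ : ℕ →*₀ ℝ, (∀ n, |ψ n| ≤ 1) ∧ ∃ c > 0, ∀ n : ℕ,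
      ∑ a ∈ Ico 1 p, (legendreSym p a : ℝ) * (Real.sin (2 * π * n * (a / p)) -
        Real.sin (2 * π * n * (a / p - 1 / 3))) = c * ψ n := by
  have mul_apply (ψ ψ' : ℕ →*₀ ℝ) (n : ℕ) : (ψ * ψ') n = ψ n * ψ' n := rfl
  have abs_mul_le {ψ ψ' : ℕ →*₀ ℝ} (h : ∀ n, |ψ n| ≤ 1) (h' : ∀ n, |ψ' n| ≤ 1) (n : ℕ) :
      |(ψ * ψ') n| ≤ 1 := by
    rw [mul_apply, abs_mul]
    exact mul_le_one₀ (h n) (abs_nonneg _) (h' n)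
  have hp_abs := abs_legendreHom_le_one p
  have h3_abs := abs_legendreHom_le_one 3
  have p_pos : (0 : ℝ) < p := Nat.cast_pos.mpr (NeZero.pos p)
  simp_rw [sum_Ico_one_legendreSym_mul_sin_sub_sin hp, one_sub_exp_neg_two_pi_mul_third]
  rcases (p / 2).even_or_odd' with ⟨k, hk | hk⟩
  · have I_pow : Complex.I ^ (p / 2) ^ 2 = 1 := by
      rw [hk, show (2 * k) ^ 2 = 4 * k ^ 2 by ring, pow_mul, Complex.I_pow_four, one_pow]
    refine ⟨legendreHom p * legendreHom 3, abs_mul_le hp_abs h3_abs, √p * (√3 / 2),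
      by positivity, fun n ↦ ?_⟩
    rw [I_pow, one_mul, Complex.add_im, Complex.ofReal_im, Complex.im_ofReal_mul, Complex.I_im,
      mul_apply, legendreHom_apply, legendreHom_apply]
    ring
  · have I_pow : Complex.I ^ (p / 2) ^ 2 = Complex.I := by
      rw [hk, show (2 * k + 1) ^ 2 = 4 * (k ^ 2 + k) + 1 by ring, pow_succ, pow_mul,
        Complex.I_pow_four, one_pow, one_mul]
    refine ⟨legendreHom p * (legendreHom 3 * legendreHom 3),
      abs_mul_le hp_abs (abs_mul_le h3_abs h3_abs), √p * (3 / 2), by positivity, fun n ↦ ?_⟩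
    rw [I_pow, Complex.I_mul_im, Complex.add_re, Complex.ofReal_re, Complex.re_ofReal_mul,
      Complex.I_re, mul_apply, mul_apply, legendreHom_apply, legendreHom_apply]
    ring

theorem natCast_div_ne_one_div {N k : ℕ} (hk₀ : k ≠ 0) (hk : ¬k ∣ N) (a : ℕ) :
    (a / N : ℝ) ≠ 1 / k := by
  have hN : N ≠ 0 := fun h ↦ hk (h ▸ dvd_zero k)
  rw [Ne, div_eq_div_iff (by positivity) (by positivity), one_mul, ← Nat.cast_mul, Nat.cast_inj]
  exact fun h ↦ hk (h ▸ dvd_mul_left k a)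

theorem filter_Ico_one_div_lt_one_div {N k : ℕ} (hk₀ : k ≠ 0) (hk : ¬k ∣ N) :
    (Ico 1 N).filter (fun a : ℕ ↦ (a / N : ℝ) < 1 / k) = Icc 1 (N / k) := by
  have hN : N ≠ 0 := fun h ↦ hk (h ▸ dvd_zero k)
  have one_lt : 1 < k := Nat.one_lt_iff_ne_zero_and_ne_one.mpr ⟨hk₀, by rintro rfl; simp at hk⟩
  ext a
  have lt_iff : (a / N : ℝ) < 1 / k ↔ a ≤ N / k := by
    rw [div_lt_div_iff₀ (by positivity) (by positivity), one_mul, ← Nat.cast_mul, Nat.cast_lt,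
      Nat.le_div_iff_mul_le (by positivity)]
    exact ⟨le_of_lt, fun h ↦ h.lt_of_ne fun eq ↦ hk (eq ▸ dvd_mul_left k a)⟩
  have lt_of_le (h : a ≤ N / k) : a < N := h.trans_lt (Nat.div_lt_self (by positivity) one_lt)
  rw [mem_filter, mem_Ico, mem_Icc, lt_iff]
  tauto

/-- For every prime `p > 3`, the sum `∑_{n=1}^{⌊p/3⌋} (n/p)` of Legendre
symbols is nonnegative. -/
theorem stmt_10 (p : ℕ) [Fact p.Prime] (hp : 3 < p) :
    0 ≤ ∑ n ∈ Finset.Icc 1 (p / 3), legendreSym p (n : ℤ) := by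
  have p_pos : (0 : ℝ) < p := by positivity
  have three_not_dvd : ¬3 ∣ p := by
    rw [Nat.prime_dvd_prime_iff_eq Nat.prime_three Fact.out]
    exact hp.ne
  obtain ⟨ψ, hψ, c, c_pos, sum_eq⟩ :=
    exists_sum_Ico_one_legendreSym_mul_sin_sub_sin_eq (p := p) (by lia)
  have lim := tendsto_sum_range_sum_sin_sub_sin_div (s := Ico 1 p) (x := fun a : ℕ ↦ (a / p : ℝ))
    (fun a ↦ legendreSym p a) (fun a ha ↦ div_pos (Nat.cast_pos.mpr (mem_Ico.mp ha).1) p_pos)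
    (fun a ha ↦ (div_lt_one p_pos).mpr (Nat.cast_lt.mpr (mem_Ico.mp ha).2))
    (t := 1 / (3 : ℕ)) (by norm_num) (by norm_num)
    (fun a _ ↦ natCast_div_ne_one_div three_ne_zero three_not_dvd a)
  rw [filter_Ico_one_div_lt_one_div three_ne_zero three_not_dvd, ← Int.cast_sum, ← Int.cast_sum,
    sum_Ico_one_legendreSym (by lia), Int.cast_zero, mul_zero, sub_zero] at lim
  simp only [Nat.cast_ofNat, sum_eq, mul_div_assoc, ← mul_sum] at lim
  have lim_ψ := lim.const_mul c⁻¹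
  simp only [inv_mul_cancel_left₀ c_pos.ne'] at lim_ψ
  have nonneg := nonneg_of_tendsto_sum_div hψ lim_ψ
  rwa [mul_nonneg_iff_of_pos_left (inv_pos.mpr c_pos), mul_nonneg_iff_of_pos_left Real.pi_pos,
    Int.cast_nonneg_iff] at nonneg
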